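/- arXiv:2506.19032 — 2 statements merged into one kernel-verified Lean document; each statement's English description precedes it below -/
import Mathlib

section
/- For an integer n ≥ 1, the prime simplicial complex Π(A_n) of the alternating group A_n is pure if and only if n ≤ 6 or n = 10. -/
/-- A finite set of primes `S` is a *prime simplex* of the group `G` if it is nonempty,
consists of primes, and `G` contains an element whose order is the product of the
primes in `S`. -/
def IsPrimeSimplex (G : Type*) [Group G] (S : Finset ℕ) : Prop :=
  S.Nonempty ∧ (∀ p ∈ S, p.Prime) ∧ ∃ g : G, orderOf g = ∏ p ∈ S, p

/-- A prime simplex is maximal if it is maximal with respect to inclusion among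
prime simplices. -/
def IsMaximalPrimeSimplex (G : Type*) [Group G] (S : Finset ℕ) : Prop :=
  IsPrimeSimplex G S ∧ ∀ T : Finset ℕ, IsPrimeSimplex G T → S ⊆ T → T = S

/-- The prime simplicial complex of `G` is *pure* if all maximal prime simplices have
the same cardinality. -/
def PurePrimeSimplicialComplex (G : Type*) [Group G] : Prop :=
  ∀ S T : Finset ℕ, IsMaximalPrimeSimplex G S → IsMaximalPrimeSimplex G T →
    S.card = T.card

/-- Weight of a prime in the alternating group. -/
def wt (p : ℕ) : ℕ := if p = 2 then 4 else p

/-- Total weight of a finite set. -/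
def Wt (S : Finset ℕ) : ℕ := ∑ p ∈ S, wt p

/-- The set of primes up to `x`. -/
def PA (x : ℕ) : Finset ℕ := (Finset.range (x + 1)).filter Nat.Prime

/-- A finite set of primes of weight at most `n`. -/
def Ok (n : ℕ) (S : Finset ℕ) : Prop := (∀ p ∈ S, p.Prime) ∧ Wt S ≤ n

lemma le_wt (p : ℕ) : p ≤ wt p := by unfold wt; split_ifs <;> omega

lemma mem_PA {x p : ℕ} : p ∈ PA x ↔ p ≤ x ∧ p.Prime := by
  simp [PA]

lemma Wt_mono {S T : Finset ℕ} (h : S ⊆ T) : Wt S ≤ Wt T :=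
  Finset.sum_le_sum_of_subset h

lemma wt_le_Wt {S : Finset ℕ} {p : ℕ} (h : p ∈ S) : wt p ≤ Wt S :=
  Finset.single_le_sum (f := wt) (fun _ _ => Nat.zero_le _) h

lemma min_lemma {y : ℕ} (hy : 3 ≤ y) {T : Finset ℕ} (hT : ∀ p ∈ T, p.Prime)
    (hc : (PA y).card ≤ T.card) : Wt (PA y) ≤ Wt T := by
  unfold Wt
  rw [← Finset.sum_sdiff_le_sum_sdiff]
  have h1 : ∑ p ∈ PA y \ T, wt p ≤ (PA y \ T).card • (y + 1) := by
    apply Finset.sum_le_card_nsmul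
    intro p hp
    have := (mem_PA.1 (Finset.mem_sdiff.1 hp).1)
    unfold wt; split_ifs <;> omega
  have h2 : (T \ PA y).card • (y + 1) ≤ ∑ p ∈ T \ PA y, wt p := by
    apply Finset.card_nsmul_le_sum
    intro p hp
    have h := Finset.mem_sdiff.1 hp
    have h3 : ¬ (p ≤ y ∧ p.Prime) := fun h' => h.2 (mem_PA.2 h')
    have h4 := hT p h.1
    have h5 := le_wt p
    have : ¬ p ≤ y := fun h' => h3 ⟨h', h4⟩
    omega
  have h3 : (PA y \ T).card ≤ (T \ PA y).card := by
    have a := Finset.card_sdiff_add_card_inter (PA y) T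
    have b := Finset.card_sdiff_add_card_inter T (PA y)
    rw [Finset.inter_comm] at b
    omega
  calc _ ≤ _ := h1
    _ ≤ (T \ PA y).card • (y + 1) := by gcongr
    _ ≤ _ := h2

lemma Ok_ext {n : ℕ} {S : Finset ℕ} (h : Ok n S) :
    ∃ T, S ⊆ T ∧ Ok n T ∧ ∀ U, Ok n U → T ⊆ U → U = T := by
  have hf : {T | Ok n T}.Finite := by
    apply (Finset.finite_toSet (Finset.range (n + 1)).powerset).subset
    intro T hT
    simp only [Finset.coe_powerset, Set.mem_preimage, Set.mem_powerset_iff, Finset.coe_subset]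
    intro p hp
    have := le_wt p
    have := wt_le_Wt hp
    have := hT.2
    simp; omega
  obtain ⟨T, hST, hT⟩ := hf.exists_le_maximal (a := S) h
  exact ⟨T, hST, hT.prop, fun U hU hTU => Finset.Subset.antisymm (hT.le_of_ge hU hTU) hTU⟩

lemma sum_le_prod_primes (S : Finset ℕ) (hS : ∀ p ∈ S, p.Prime) : ∑ p ∈ S, p ≤ ∏ p ∈ S, p := by
  induction S using Finset.induction_on with
  | empty => simp
  | insert a s ha ih =>
    rw [Finset.sum_insert ha, Finset.prod_insert ha]
    have h1 := ih fun p hp => hS p (Finset.mem_insert_of_mem hp)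
    have h2 := (hS a (Finset.mem_insert_self _ _)).two_le
    rcases s.eq_empty_or_nonempty with rfl | ⟨b, hb⟩
    · simp
    · have h3 := (hS b (Finset.mem_insert_of_mem hb)).two_le
      have h4 : b ≤ ∑ p ∈ s, p := Finset.single_le_sum (f := fun p => p) (fun _ _ => Nat.zero_le _) hb
      nlinarith

lemma double_count (S : Finset ℕ) (hS : ∀ p ∈ S, p.Prime) (m : Multiset ℕ) (hm : ∀ c ∈ m, 0 < c) :
    ∑ p ∈ S, p * m.countP (p ∣ ·) ≤ m.sum := by
  induction m using Multiset.induction_on with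
  | empty => simp
  | cons c m ih =>
    have h1 := ih fun c hc => hm c (Multiset.mem_cons_of_mem hc)
    have h0 := hm c (Multiset.mem_cons_self _ _)
    have h2 : ∑ p ∈ S.filter (· ∣ c), p ≤ c := by
      refine (sum_le_prod_primes _ fun p hp => hS p (Finset.mem_filter.1 hp).1).trans ?_
      apply Nat.le_of_dvd h0
      apply Finset.prod_primes_dvd
      · intro p hp; exact (hS p (Finset.mem_filter.1 hp).1).prime
      · intro p hp; exact (Finset.mem_filter.1 hp).2
    rw [Finset.sum_filter] at h2
    simp only [Multiset.countP_cons, Multiset.sum_cons, mul_add, Finset.sum_add_distrib, mul_ite,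
      mul_one, mul_zero]
    omega

lemma parity (m : Multiset ℕ) :
    (m.map fun n => -(-1 : ℤˣ) ^ n).prod = (-1) ^ (m.countP (2 ∣ ·)) := by
  induction m using Multiset.induction_on with
  | empty => simp
  | cons c m ih =>
    simp only [Multiset.map_cons, Multiset.prod_cons, ih, Multiset.countP_cons]
    split_ifs with h
    · rw [(even_iff_two_dvd.2 h).neg_one_pow, pow_succ]; simp
    · rw [(Nat.not_even_iff_odd.1 (fun h' => h (even_iff_two_dvd.1 h'))).neg_one_pow]; simp

lemma simplex_iff (n : ℕ) (S : Finset ℕ) :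
    IsPrimeSimplex (alternatingGroup (Fin n)) S ↔ S.Nonempty ∧ Ok n S := by
  unfold IsPrimeSimplex Ok
  refine and_congr_right fun _ => and_congr_right fun hS => ?_
  constructor
  · rintro ⟨g, hg⟩
    have hord : orderOf (g : Equiv.Perm (Fin n)) = ∏ p ∈ S, p := by
      rw [← hg, Subgroup.orderOf_coe]
    have hsign := Equiv.Perm.mem_alternatingGroup.1 g.2
    rw [Equiv.Perm.sign_of_cycleType', parity] at hsign
    set m := (g : Equiv.Perm (Fin n)).cycleType with hm
    have hsum : m.sum ≤ n := by
      simpa using Equiv.Perm.sum_cycleType_le (g : Equiv.Perm (Fin n))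
    rw [← Equiv.Perm.lcm_cycleType, ← hm] at hord
    refine le_trans ?_ ((double_count S hS m fun c hc =>
      (Nat.zero_lt_of_lt (Equiv.Perm.one_lt_of_mem_cycleType hc))).trans hsum)
    apply Finset.sum_le_sum
    intro p hp
    have hpos : 0 < m.countP (p ∣ ·) := by
      rw [Multiset.countP_pos]
      by_contra! hcon
      have hpd : p ∣ m.lcm := hord ▸ Finset.dvd_prod_of_mem (fun p => p) hp
      have key : ∀ m : Multiset ℕ, p ∣ m.lcm → ∃ c ∈ m, p ∣ c := by
        intro m
        induction m using Multiset.induction_on with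
        | empty => intro h; simp at h; exact absurd h (hS p hp).one_lt.ne'
        | cons c m ih =>
          intro h
          rw [Multiset.lcm_cons] at h
          have h' : p ∣ c * m.lcm := h.trans (lcm_dvd_mul _ _)
          rcases (hS p hp).dvd_mul.1 h' with h | h
          · exact ⟨c, by simp, h⟩
          · obtain ⟨d, hd, h⟩ := ih h
            exact ⟨d, Multiset.mem_cons_of_mem hd, h⟩
      obtain ⟨c, hc, h⟩ := key m hpd
      exact hcon c hc h
    unfold wt
    split_ifs with h2
    · subst h2
      have : Even (m.countP (2 ∣ ·)) := by
        by_contra ho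
        rw [(Nat.not_even_iff_odd.1 ho).neg_one_pow] at hsign
        exact absurd hsign (by decide)
      obtain ⟨k, hk⟩ := this
      omega
    · exact Nat.le_mul_of_pos_right _ hpos
  · intro hW
    set m : Multiset ℕ := S.val + (if 2 ∈ S then {2} else 0) with hm
    have hsum : m.sum = Wt S := by
      rw [hm, Multiset.sum_add]
      have h1 : Wt S = ∑ p ∈ S, (p + if p = 2 then 2 else 0) :=
        Finset.sum_congr rfl fun p _ => by unfold wt; split_ifs <;> omega
      rw [h1, Finset.sum_add_distrib, Finset.sum_ite_eq']
      congr 1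
      · exact Finset.sum_val S
      · split_ifs <;> simp
    have h2 : ∀ a ∈ m, 2 ≤ a := by
      intro a ha
      rw [hm, Multiset.mem_add] at ha
      rcases ha with ha | ha
      · exact (hS a ha).two_le
      · split_ifs at ha <;> simp at ha; omega
    obtain ⟨g, hg⟩ := (Equiv.Perm.exists_with_cycleType_iff (Fin n) (m := m)).2
      ⟨by simpa [hsum] using hW, h2⟩
    have hsg : Equiv.Perm.sign g = 1 := by
      rw [Equiv.Perm.sign_of_cycleType', parity, hg]
      apply Even.neg_one_pow
      rw [hm, Multiset.countP_add]
      have h3 : S.val.countP (2 ∣ ·) = if 2 ∈ S then 1 else 0 := by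
        rw [Multiset.countP_eq_card_filter, ← Finset.filter_val, Finset.card_val]
        have : S.filter (2 ∣ ·) = S.filter (· = 2) := by
          apply Finset.filter_congr
          intro p hp
          rw [Nat.prime_dvd_prime_iff_eq Nat.prime_two (hS p hp), eq_comm]
        rw [this, Finset.filter_eq']
        split_ifs <;> simp
      rw [h3]
      split_ifs
      · exact ⟨1, by simp [← Multiset.cons_zero, Multiset.countP_cons]⟩
      · simp
    refine ⟨⟨g, Equiv.Perm.mem_alternatingGroup.2 hsg⟩, ?_⟩
    rw [Subgroup.orderOf_mk, ← Equiv.Perm.lcm_cycleType, hg, hm, Multiset.lcm_add]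
    have h4 : S.val.lcm = ∏ p ∈ S, p := by
      apply Nat.dvd_antisymm
      · rw [Multiset.lcm_dvd]
        intro p hp
        exact Finset.dvd_prod_of_mem (fun p => p) hp
      · apply Finset.prod_primes_dvd
        · intro p hp; exact (hS p hp).prime
        · intro p hp; exact Multiset.dvd_lcm hp
    split_ifs with h
    · rw [h4]
      apply Nat.dvd_antisymm
      · apply lcm_dvd dvd_rfl
        simpa using Finset.dvd_prod_of_mem (fun p => p) h
      · exact dvd_lcm_left _ _
    · rw [h4]; simp

lemma max_iff (n : ℕ) (S : Finset ℕ) :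
    IsMaximalPrimeSimplex (alternatingGroup (Fin n)) S ↔
      S.Nonempty ∧ Ok n S ∧ ∀ T, Ok n T → S ⊆ T → T = S := by
  unfold IsMaximalPrimeSimplex
  simp only [simplex_iff]
  constructor
  · rintro ⟨⟨h1, h2⟩, h3⟩
    exact ⟨h1, h2, fun T hT hST => h3 T ⟨h1.mono hST, hT⟩ hST⟩
  · rintro ⟨h1, h2, h3⟩
    exact ⟨⟨h1, h2⟩, fun T hT hST => h3 T hT.2 hST⟩

lemma not_pure {n p : ℕ} (hp : p.Prime) (hpn : p ≤ n) (h2 : n < 2 * p) (hp2 : p ≠ 2)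
    (A : Finset ℕ) (hA : Ok n A) (hcard : ∀ T, Ok (n - p) T → T.card + 2 ≤ A.card) :
    ¬ PurePrimeSimplicialComplex (alternatingGroup (Fin n)) := by
  intro hpure
  have hwp : wt p = p := by simp [wt, hp2]
  obtain ⟨A', hAA, hA', hmA⟩ := Ok_ext hA
  obtain ⟨T, -, hT, hmT⟩ := Ok_ext (n := n - p) (S := ∅) ⟨by simp, by simp [Wt]⟩
  have hpT : p ∉ T := fun h => by
    have := wt_le_Wt h
    have := hT.2
    omega
  have hmax : IsMaximalPrimeSimplex (alternatingGroup (Fin n)) (insert p T) := by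
    rw [max_iff]
    refine ⟨Finset.insert_nonempty _ _, ⟨?_, ?_⟩, ?_⟩
    · intro q hq
      rcases Finset.mem_insert.1 hq with rfl | hq
      · exact hp
      · exact hT.1 q hq
    · have := hT.2
      unfold Wt at *
      rw [Finset.sum_insert hpT]; omega
    · intro U hU hsub
      have hpU : p ∈ U := hsub (Finset.mem_insert_self _ _)
      have : U.erase p = T := by
        apply hmT
        · refine ⟨fun q hq => hU.1 q (Finset.mem_of_mem_erase hq), ?_⟩
          have := hU.2
          unfold Wt at *
          rw [← Finset.add_sum_erase _ _ hpU] at this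
          omega
        · intro q hq
          refine Finset.mem_erase.2 ⟨fun h => hpT (h ▸ hq), hsub (Finset.mem_insert_of_mem hq)⟩
      rw [← this, Finset.insert_erase hpU]
  have h0 := hcard T hT
  have h1 := Finset.card_le_card hAA
  have h3 := hpure (insert p T) A' hmax ((max_iff _ _).2
    ⟨Finset.card_pos.1 (by omega), hA', hmA⟩)
  rw [Finset.card_insert_of_notMem hpT] at h3
  omega

lemma not_pure' {n p : ℕ} (hp : p.Prime) (hpn : p ≤ n) (h2 : n < 2 * p) (hp2 : p ≠ 2)
    (x y : ℕ) (hy : 3 ≤ y) (hx : Wt (PA x) ≤ n) (hr : n - p < Wt (PA y))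
    (hxy : (PA y).card + 1 ≤ (PA x).card) :
    ¬ PurePrimeSimplicialComplex (alternatingGroup (Fin n)) := by
  refine not_pure hp hpn h2 hp2 (PA x) ⟨fun p hp => (mem_PA.1 hp).2, hx⟩ fun T hT => ?_
  by_contra! h
  have := min_lemma hy hT.1 (by omega)
  have := hT.2
  omega

lemma PA_succ_prime {x : ℕ} (h : (x + 1).Prime) : PA (x + 1) = insert (x + 1) (PA x) := by
  unfold PA
  rw [Finset.range_add_one, Finset.filter_insert, if_pos h]

lemma PA_succ_not_prime {x : ℕ} (h : ¬ (x + 1).Prime) : PA (x + 1) = PA x := by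
  unfold PA
  rw [Finset.range_add_one, Finset.filter_insert, if_neg h]

lemma notMem_PA_succ (x : ℕ) : x + 1 ∉ PA x := fun h => by
  have := (mem_PA.1 h).1
  omega

lemma Wt_PA_succ {x : ℕ} (h : (x + 1).Prime) (hx : 2 ≤ x) :
    Wt (PA (x + 1)) = Wt (PA x) + (x + 1) := by
  rw [PA_succ_prime h]
  unfold Wt
  rw [Finset.sum_insert (notMem_PA_succ x), add_comm]
  congr 1
  unfold wt; split_ifs <;> omega

lemma PA_mono {x y : ℕ} (h : x ≤ y) : PA x ⊆ PA y := fun p hp =>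
  mem_PA.2 ⟨(mem_PA.1 hp).1.trans h, (mem_PA.1 hp).2⟩

lemma card_PA (x : ℕ) : (PA x).card = Nat.primeCounting x := by
  rw [PA, Nat.primeCounting, Nat.primeCounting', Nat.count_eq_card_filter_range]

lemma card_PA_le (x : ℕ) : (PA x).card ≤ x := by
  induction x with
  | zero => decide
  | succ x ih =>
    by_cases h : (x + 1).Prime
    · rw [PA_succ_prime h, Finset.card_insert_of_notMem (notMem_PA_succ x)]; omega
    · rw [PA_succ_not_prime h]; omega

lemma Wt_PA_ge (x : ℕ) : (PA x).card * (PA x).card ≤ 2 * Wt (PA x) := by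
  induction x with
  | zero => decide
  | succ x ih =>
    by_cases h : (x + 1).Prime
    · have h1 := le_wt (x + 1)
      have h2 := card_PA_le x
      rw [PA_succ_prime h, Finset.card_insert_of_notMem (notMem_PA_succ x)]
      unfold Wt at *
      rw [Finset.sum_insert (notMem_PA_succ x)]
      nlinarith
    · rw [PA_succ_not_prime h]; exact ih

lemma grow_large {x : ℕ} (hx : 1600 ≤ x) : 4 * x ≤ Wt (PA x) := by
  suffices h : 8 * x ≤ (PA x).card * (PA x).card by
    have := Wt_PA_ge x
    omega
  by_contra! hcon
  have hx' : (1600 : ℝ) ≤ x := by exact_mod_cast hx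
  have hpi := Chebyshev.pi_ge x
  rw [← card_PA] at hpi
  set j : ℝ := ((PA x).card : ℝ) with hj
  have hcon' : j * j < 8 * x := by rw [hj]; exact_mod_cast hcon
  have hj0 : 0 ≤ j := by rw [hj]; positivity
  have hLpos : 0 < Real.log x := Real.log_pos (by linarith)
  rw [div_le_iff₀ hLpos] at hpi
  obtain ⟨u, hu0, hu⟩ : ∃ u : ℝ, 0 ≤ u ∧ u * u = x :=
    ⟨√x, Real.sqrt_nonneg _, Real.mul_self_sqrt (by linarith)⟩
  have hu40 : 40 ≤ u := by nlinarith
  have hl2 := Real.log_two_gt_d9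
  have hl2' := Real.log_two_lt_d9
  have hLu : Real.log x = 2 * Real.log u := by
    rw [← hu, Real.log_mul (by linarith) (by linarith)]; ring
  have hlogu : Real.log u ≤ u / 16 - 1 + 4 * Real.log 2 := by
    have h1 := Real.log_le_sub_one_of_pos (x := u / 16) (by linarith)
    rw [Real.log_div (by linarith) (by norm_num), show (16 : ℝ) = 2 ^ 4 by norm_num,
      Real.log_pow] at h1
    push_cast at h1
    linarith
  have hlog1 : Real.log (x + 1) ≤ Real.log 2 + Real.log x := by
    rw [← Real.log_mul (by norm_num) (by linarith)]
    exact Real.log_le_log (by linarith) (by linarith)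
  have hL : Real.log x ≤ u / 8 + 3.5453 := by linarith
  have hju : j ≤ 2.829 * u := by
    by_contra! h
    nlinarith
  have h1 : (j + 1) * Real.log x ≤ (2.829 * u + 1) * (u / 8 + 3.5453) := by
    apply mul_le_mul <;> linarith
  nlinarith

lemma grow {x : ℕ} (hx : 31 ≤ x) : 4 * x ≤ Wt (PA x) := by
  rcases le_or_gt 1600 x with h | h
  · exact grow_large h
  have step : ∀ a c : ℕ, a ≤ x → c ≤ Wt (PA a) → c ≤ Wt (PA x) := fun a c h1 h2 =>
    h2.trans (Wt_mono (PA_mono h1))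
  rcases le_or_gt 300 x with h1 | h1
  · have := step 300 8000 h1 (by decide +kernel)
    omega
  rcases le_or_gt 100 x with h2 | h2
  · have := step 100 1060 h2 (by decide +kernel)
    rcases le_or_gt 200 x with h3 | h3
    · have := step 200 4000 h3 (by decide +kernel)
      omega
    · omega
  rcases le_or_gt 47 x with h3 | h3
  · have := step 47 330 h3 (by decide +kernel)
    rcases le_or_gt 73 x with h3 | h3
    · have := step 73 700 h3 (by decide +kernel)
      omega
    · omega
  rcases le_or_gt 37 x with h4 | h4
  · have := step 37 199 h4 (by decide +kernel)
    omega
  · have := step 31 162 hx (by decide +kernel)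
    omega

lemma grow_prime {x : ℕ} (hx : 23 ≤ x) (hp : x.Prime) : 4 * x ≤ Wt (PA x) := by
  rcases le_or_gt 31 x with h | h
  · exact grow h
  interval_cases x
  · decide +kernel
  all_goals first | (exfalso; revert hp; norm_num; done) | decide +kernel

lemma not_pure_large {n : ℕ} (hn : 102 ≤ n) :
    ¬ PurePrimeSimplicialComplex (alternatingGroup (Fin n)) := by
  -- the largest `x` with `Wt (PA x) ≤ n`
  obtain ⟨p, hp, hp1, hp2⟩ := Nat.exists_prime_lt_and_le_two_mul (n / 2) (by omega)
  have hex : ∃ z, n < Wt (PA z) := ⟨n + 31, by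
    have := grow (x := n + 31) (by omega)
    omega⟩
  classical
  set q := Nat.find hex with hq
  have hq1 : n < Wt (PA q) := Nat.find_spec hex
  have hq2 : ∀ z < q, Wt (PA z) ≤ n := fun z hz => not_lt.1 (Nat.find_min hex hz)
  have hq24 : 24 ≤ q := by
    by_contra! h
    have h1 := Wt_mono (PA_mono (show q ≤ 23 by omega))
    have : Wt (PA 23) = 102 := by decide +kernel
    omega
  obtain ⟨x, hx⟩ : ∃ x, q = x + 1 := ⟨q - 1, by omega⟩
  have hqp : (x + 1).Prime := by
    by_contra h
    have h1 := hq2 x (by omega)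
    rw [hx, PA_succ_not_prime h] at hq1
    omega
  -- the previous prime
  set x' := Nat.findGreatest Nat.Prime x with hx'
  have hx'p : x'.Prime := Nat.findGreatest_spec (P := Nat.Prime) (m := 23) (by omega) (by norm_num)
  have hx'23 : 23 ≤ x' := Nat.le_findGreatest (by omega) (by norm_num)
  have hx'x : x' ≤ x := Nat.findGreatest_le x
  obtain ⟨y, hy⟩ : ∃ y, x' = y + 1 := ⟨x' - 1, by omega⟩
  have hPx : PA x = PA x' := by
    apply Finset.Subset.antisymm _ (PA_mono hx'x)
    intro r hr
    have := mem_PA.1 hr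
    exact mem_PA.2 ⟨Nat.le_findGreatest this.1 this.2, this.2⟩
  obtain ⟨b, hb, hb1, hb2⟩ := Nat.exists_prime_lt_and_le_two_mul x' (by omega)
  have hbx : x < b := by
    by_contra! h
    have := Nat.le_findGreatest h hb
    omega
  have h4 := grow_prime hx'23 hx'p
  have h5 := Wt_PA_succ hqp (by omega)
  rw [← hx, hPx] at h5
  rw [hy] at hx'p h5 h4
  have h6 := Wt_PA_succ hx'p (by omega)
  refine not_pure' hp (by omega) (by omega) (by omega) x y (by omega) (hq2 x (by omega))
    (by omega) ?_
  rw [hPx, hy, PA_succ_prime hx'p, Finset.card_insert_of_notMem (notMem_PA_succ y)]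

lemma Wt_lt_three {T : Finset ℕ} (hT : ∀ p ∈ T, p.Prime) (h : Wt T < 3) : T.card = 0 := by
  rw [Finset.card_eq_zero, Finset.eq_empty_iff_forall_notMem]
  intro p hp
  have h1 := wt_le_Wt hp
  have h2 := (hT p hp).two_le
  unfold wt at h1
  split_ifs at h1 <;> omega

lemma not_pure_small {n : ℕ} (h7 : 7 ≤ n) (hn : n < 102) (h10 : n ≠ 10) :
    ¬ PurePrimeSimplicialComplex (alternatingGroup (Fin n)) := by
  have e3 : Wt (PA 3) = 7 := by decide +kernel
  have e5 : Wt (PA 5) = 12 := by decide +kernel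
  have e7 : Wt (PA 7) = 19 := by decide +kernel
  have e11 : Wt (PA 11) = 30 := by decide +kernel
  have e13 : Wt (PA 13) = 43 := by decide +kernel
  have e17 : Wt (PA 17) = 60 := by decide +kernel
  have e19 : Wt (PA 19) = 79 := by decide +kernel
  rcases le_or_gt 79 n with h | h
  · exact not_pure' (p := 53) (by norm_num) (by omega) (by omega) (by omega) 19 17 (by omega)
      (by omega) (by omega) (by decide +kernel)
  rcases le_or_gt 60 n with h | h
  · exact not_pure' (p := 43) (by norm_num) (by omega) (by omega) (by omega) 17 13 (by omega)
      (by omega) (by omega) (by decide +kernel)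
  rcases le_or_gt 43 n with h | h
  · exact not_pure' (p := 31) (by norm_num) (by omega) (by omega) (by omega) 13 11 (by omega)
      (by omega) (by omega) (by decide +kernel)
  rcases le_or_gt 30 n with h | h
  · exact not_pure' (p := 29) (by norm_num) (by omega) (by omega) (by omega) 11 7 (by omega)
      (by omega) (by omega) (by decide +kernel)
  rcases le_or_gt 19 n with h | h
  · exact not_pure' (p := 19) (by norm_num) (by omega) (by omega) (by omega) 7 5 (by omega)
      (by omega) (by omega) (by decide +kernel)
  rcases le_or_gt 18 n with h | h
  · exact not_pure' (p := 13) (by norm_num) (by omega) (by omega) (by omega) 5 3 (by omega)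
      (by omega) (by omega) (by decide +kernel)
  rcases le_or_gt 12 n with h | h
  · exact not_pure' (p := 11) (by norm_num) (by omega) (by omega) (by omega) 5 3 (by omega)
      (by omega) (by omega) (by decide +kernel)
  have hc : (PA 3).card = 2 := by decide +kernel
  have hok : Ok n (PA 3) := ⟨fun p hp => (mem_PA.1 hp).2, by omega⟩
  rcases le_or_gt 11 n with h | h
  · refine not_pure (p := 11) (by norm_num) (by omega) (by omega) (by omega) (PA 3) hok ?_
    intro T hT
    have := Wt_lt_three hT.1 (by have := hT.2; omega)
    omega
  · refine not_pure (p := 7) (by norm_num) (by omega) (by omega) (by omega) (PA 3) hok ?_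
    intro T hT
    have := Wt_lt_three hT.1 (by have := hT.2; omega)
    omega

lemma pure_le_six {n : ℕ} (hn : n ≤ 6) : PurePrimeSimplicialComplex (alternatingGroup (Fin n)) := by
  have key : ∀ S, IsMaximalPrimeSimplex (alternatingGroup (Fin n)) S → S.card = 1 := by
    intro S hS
    rw [max_iff] at hS
    have h1 := hS.1.card_pos
    by_contra h
    have h2 := min_lemma (y := 3) le_rfl hS.2.1.1 (by
      have : (PA 3).card = 2 := by decide +kernel
      omega)
    have e3 : Wt (PA 3) = 7 := by decide +kernel
    have := hS.2.1.2
    omega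
  intro S T hS hT
  rw [key S hS, key T hT]

lemma pure_ten : PurePrimeSimplicialComplex (alternatingGroup (Fin 10)) := by
  have key : ∀ S, IsMaximalPrimeSimplex (alternatingGroup (Fin 10)) S → S.card = 2 := by
    intro S hS
    rw [max_iff] at hS
    obtain ⟨h0, h1, h2⟩ := hS
    have h3 := h0.card_pos
    have h4 : S.card < 3 := by
      by_contra! h
      have h2 := min_lemma (y := 5) (by omega) h1.1 (by
        have : (PA 5).card = 3 := by decide +kernel
        omega)
      have e5 : Wt (PA 5) = 12 := by decide +kernel
      have := h1.2
      omega
    have h5 : S.card ≠ 1 := by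
      intro h
      obtain ⟨p, rfl⟩ := Finset.card_eq_one.1 h
      have hp := h1.1 p (by simp)
      have hle : p ≤ 10 := (le_wt p).trans ((wt_le_Wt (by simp)).trans h1.2)
      have ext : ∀ T : Finset ℕ, p ∈ T → T.card = 2 → (∀ q ∈ T, q.Prime) → Wt T ≤ 10 → False := by
        intro T hpT hc hT hW
        have := h2 T ⟨hT, hW⟩ (by simpa using hpT)
        rw [this] at hc
        simp at hc
      interval_cases p
      all_goals first
        | (exfalso; revert hp; norm_num; done)
        | exact ext {2, 3} (by decide) (by decide) (by decide +kernel) (by decide)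
        | exact ext {3, 5} (by decide) (by decide) (by decide +kernel) (by decide)
        | exact ext {3, 7} (by decide) (by decide) (by decide +kernel) (by decide)
    omega
  intro S T hS hT
  rw [key S hS, key T hT]

theorem stmt_9 (n : ℕ) (hn : 1 ≤ n) :
    PurePrimeSimplicialComplex (alternatingGroup (Fin n)) ↔ n ≤ 6 ∨ n = 10 := by
  constructor
  · intro h
    by_contra! hc
    rcases le_or_gt 102 n with h1 | h1
    · exact not_pure_large h1 h
    · exact not_pure_small (by omega) h1 hc.2 h
  · rintro (h | rfl)
    · exact pure_le_six h
    · exact pure_ten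
end

section
/- Let q ≥ 4 be a prime power. The prime simplicial complex Π(PSL₂(F_q)) is pure if and only if q ∈ {4, 5, 7, 8, 9, 17}. -/
/-- The projective special linear group of degree 2 over a field `F`:
the quotient of `SL₂(F)` by its center. -/
abbrev PSL2 (F : Type*) [Field F] : Type _ :=
  Matrix.SpecialLinearGroup (Fin 2) F ⧸
    Subgroup.center (Matrix.SpecialLinearGroup (Fin 2) F)

/-- every two primes dividing `m` agree -/
def OnePrime (m : ℕ) : Prop := ∀ r s : ℕ, r.Prime → s.Prime → r ∣ m → s ∣ m → r = s

lemma OnePrime.pow {m r : ℕ} (h : OnePrime m) (hm : m ≠ 0) (hr : r.Prime) (hd : r ∣ m) :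
    ∃ k, m = r ^ k := by
  refine ⟨m.primeFactorsList.length, Nat.eq_prime_pow_of_unique_prime_dvd hm ?_⟩
  intro d hd1 hd2
  exact h d r hd1 hr hd2 hd

lemma onePrime_pow (r k : ℕ) (hr : r.Prime) : OnePrime (r ^ k) := by
  intro a b ha hb h1 h2
  rw [(Nat.prime_dvd_prime_iff_eq ha hr).1 (ha.dvd_of_dvd_pow h1),
    (Nat.prime_dvd_prime_iff_eq hb hr).1 (hb.dvd_of_dvd_pow h2)]

lemma nt_plus (f m : ℕ) (h : 2 ^ f + 1 = 3 ^ m) : f = 1 ∨ f = 3 := by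
  by_cases hf : f < 4
  · interval_cases f
    · exfalso
      have : 3 ^ m % 2 = 1 := by rw [Nat.pow_mod]; simp
      omega
    · simp
    · exfalso
      rcases m with _ | _ | m
      · simp at h
      · simp at h
      · rw [pow_succ, pow_succ] at h; omega
    · simp
  · exfalso
    obtain ⟨g, rfl⟩ : ∃ g, f = g + 4 := ⟨f - 4, by omega⟩
    rw [pow_add] at h
    have h16 : 3 ^ m % 16 = 1 := by omega
    obtain ⟨k, j, hj, rfl⟩ : ∃ k j, j < 4 ∧ m = 4 * k + j :=
      ⟨m / 4, m % 4, Nat.mod_lt _ (by norm_num), by omega⟩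
    have h1 : 3 ^ (4 * k) % 80 = 1 := by rw [pow_mul, Nat.pow_mod]; norm_num
    rw [pow_add] at h h16
    have hj0 : j = 0 := by
      interval_cases j
      · rfl
      all_goals (exfalso; omega)
    subst hj0
    have h5 : 5 ∣ 2 ^ (g+4) := by rw [pow_add]; omega
    have := (Nat.prime_five.dvd_of_dvd_pow h5)
    omega

lemma nt_minus (f m : ℕ) (h : 2 ^ f = 3 ^ m + 1) : f = 1 ∨ f = 2 := by
  by_cases hf : f < 3
  · interval_cases f
    · exfalso
      have : 0 < 3 ^ m := by positivity
      omega
    · simp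
    · simp
  · exfalso
    obtain ⟨g, rfl⟩ : ∃ g, f = g + 3 := ⟨f - 3, by omega⟩
    rw [pow_add] at h
    obtain ⟨k, j, hj, rfl⟩ : ∃ k j, j < 2 ∧ m = 2 * k + j :=
      ⟨m / 2, m % 2, Nat.mod_lt _ (by norm_num), by omega⟩
    have h1 : 3 ^ (2 * k) % 8 = 1 := by rw [pow_mul, Nat.pow_mod]; norm_num
    rw [pow_add] at h
    interval_cases j <;> omega

lemma three_plus (f : ℕ) (hf : f % 2 = 1) : 3 ∣ 2 ^ f + 1 := by
  obtain ⟨k, rfl⟩ : ∃ k, f = 2 * k + 1 := ⟨f / 2, by omega⟩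
  have h1 : 2 ^ (2 * k) % 3 = 1 := by rw [pow_mul, Nat.pow_mod]; norm_num
  rw [pow_succ]; omega

lemma three_minus (f : ℕ) (hf : f % 2 = 0) : 3 ∣ 2 ^ f - 1 := by
  obtain ⟨k, rfl⟩ : ∃ k, f = 2 * k := ⟨f / 2, by omega⟩
  have h1 : 2 ^ (2 * k) % 3 = 1 := by rw [pow_mul, Nat.pow_mod]; norm_num
  omega

lemma plus_cases (f : ℕ) (h : OnePrime (2 ^ f + 1)) (hf : f % 2 = 1) : f = 1 ∨ f = 3 := by
  obtain ⟨k, hk⟩ := h.pow (Nat.succ_ne_zero _) Nat.prime_three (three_plus f hf)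
  exact nt_plus f k hk

lemma minus_cases (f : ℕ) (h : OnePrime (2 ^ f - 1)) (hf : f % 2 = 0) : f = 0 ∨ f = 2 := by
  rcases Nat.eq_zero_or_pos f with h0 | h0
  · exact Or.inl h0
  have : 2 ≤ 2 ^ f := by
    calc 2 = 2 ^ 1 := rfl
      _ ≤ 2 ^ f := Nat.pow_le_pow_right (by norm_num) h0
  obtain ⟨k, hk⟩ := h.pow (by omega) Nat.prime_three (three_minus f hf)
  have := nt_minus f k (by omega)
  omega

lemma nt_main (p n : ℕ) (hp : p.Prime) (q : ℕ) (hq : q = p ^ n) (h4 : 4 ≤ q)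
    (h1 : OnePrime ((q - 1) / Nat.gcd 2 (q - 1))) (h2 : OnePrime ((q + 1) / Nat.gcd 2 (q + 1))) :
    q ∈ ({4, 5, 7, 8, 9, 17} : Finset ℕ) := by
  rcases Nat.even_or_odd' q with ⟨c, hc | hc⟩
  · have hn0 : n ≠ 0 := by rintro rfl; simp at hq; omega
    have hp2 : p = 2 := by
      have : 2 ∣ p ^ n := by omega
      exact ((Nat.prime_dvd_prime_iff_eq Nat.prime_two hp).1
        (Nat.prime_two.dvd_of_dvd_pow this)).symm
    have e1 : Nat.gcd 2 (q - 1) = 1 := Nat.coprime_two_left.2 ⟨c - 1, by omega⟩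
    have e2 : Nat.gcd 2 (q + 1) = 1 := Nat.coprime_two_left.2 ⟨c, by omega⟩
    rw [e1, Nat.div_one] at h1
    rw [e2, Nat.div_one] at h2
    subst hp2
    subst hq
    rcases Nat.mod_two_eq_zero_or_one n with h | h
    · rcases minus_cases n h1 h with rfl | rfl
      · omega
      · simp
    · rcases plus_cases n h2 h with rfl | rfl
      · omega
      · simp
  · have e1 : Nat.gcd 2 (q - 1) = 2 := Nat.gcd_eq_left (by omega)
    have e2 : Nat.gcd 2 (q + 1) = 2 := Nat.gcd_eq_left (by omega)
    rw [e1] at h1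
    rw [e2] at h2
    have hqone : OnePrime q := hq ▸ onePrime_pow p n hp
    have a1 : (q - 1) / 2 = c := by omega
    have a2 : (q + 1) / 2 = c + 1 := by omega
    rw [a1] at h1
    rw [a2] at h2
    by_cases hce : 2 ∣ c
    · obtain ⟨a, ha⟩ := h1.pow (by omega) Nat.prime_two hce
      rcases Nat.mod_two_eq_zero_or_one a with h | h
      · have := plus_cases (a + 1) (by rwa [pow_succ, ← ha, mul_comm, ← hc]) (by omega)
        rcases this with h | h
        · obtain rfl : a = 0 := by omega
          norm_num at ha; omega
        · obtain rfl : a = 2 := by omega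
          norm_num at ha; subst ha; subst hc; simp
      · have := plus_cases a (by rwa [← ha]) (by omega)
        rcases this with rfl | rfl <;> norm_num at ha <;> subst ha <;> subst hc <;> simp
    · obtain ⟨a, ha⟩ := h2.pow (by omega) Nat.prime_two (by omega)
      rcases Nat.mod_two_eq_zero_or_one a with h | h
      · have := minus_cases a (by rwa [← ha]) (by omega)
        rcases this with rfl | rfl
        · norm_num at ha; omega
        · obtain rfl : c = 3 := by omega
          subst hc; simp
      · have := minus_cases (a + 1) (by
          have : 2 ^ (a + 1) - 1 = q := by rw [pow_succ]; omega
          rwa [this]) (by omega)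
        obtain rfl : a = 1 := by omega
        omega

lemma mem_center_sl2 {F : Type*} [Field F] (A : Matrix.SpecialLinearGroup (Fin 2) F) :
    A ∈ Subgroup.center (Matrix.SpecialLinearGroup (Fin 2) F) ↔
      A.1 0 1 = 0 ∧ A.1 1 0 = 0 ∧ A.1 0 0 = A.1 1 1 := by
  rw [Matrix.SpecialLinearGroup.mem_center_iff]
  constructor
  · rintro ⟨r, -, h⟩
    rw [← h]
    simp
  · rintro ⟨h1, h2, h3⟩
    refine ⟨A.1 0 0, ?_, ?_⟩
    · have := A.2
      rw [Matrix.det_fin_two, h1, h2] at this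
      simp only [Fintype.card_fin]
      linear_combination this + A.1 0 0 * h3
    · ext i j
      fin_cases i <;> fin_cases j <;> simp [h1, h2, h3]

lemma cayley_sl2 {F : Type*} [Field F] (A : Matrix.SpecialLinearGroup (Fin 2) F) :
    A.1 * A.1 = A.1.trace • A.1 - 1 := by
  have h := A.2
  rw [Matrix.det_fin_two] at h
  ext i j
  fin_cases i <;> fin_cases j <;>
    simp [Matrix.mul_apply, Fin.sum_univ_two, Matrix.trace_fin_two] <;> first | linear_combination -h | (ring1)

lemma cayley_entry {F : Type*} [Field F] (A : Matrix.SpecialLinearGroup (Fin 2) F) (n : ℕ)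
    (i j : Fin 2) :
    (A ^ (n + 2)).1 i j = A.1.trace * (A ^ (n + 1)).1 i j - (A ^ n).1 i j := by
  have : (A ^ (n + 2)).1 = A.1.trace • (A ^ (n + 1)).1 - (A ^ n).1 := by
    rw [Matrix.SpecialLinearGroup.coe_pow, Matrix.SpecialLinearGroup.coe_pow,
      Matrix.SpecialLinearGroup.coe_pow, pow_add, pow_two, cayley_sl2, mul_sub, mul_one,
      Matrix.mul_smul, pow_succ]
  rw [this]; simp

section
variable {F K : Type*} [Field F] [Field K] [Algebra F K]

lemma pow_entry (A : Matrix.SpecialLinearGroup (Fin 2) F) (l m : K) (hlm : l * m = 1)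
    (ht : l + m = algebraMap F K A.1.trace) (i j : Fin 2) (n : ℕ) :
    (l - m) * algebraMap F K ((A ^ n).1 i j) =
      (l ^ n - m ^ n) * algebraMap F K (A.1 i j) +
        (l * m ^ n - m * l ^ n) * algebraMap F K ((1 : Matrix (Fin 2) (Fin 2) F) i j) := by
  induction n using Nat.twoStepInduction with
  | zero => simp
  | one => simp only [pow_one]; ring
  | more n h1 h2 =>
    rw [cayley_entry, map_sub, map_mul, ← ht]
    have e : (l - m) * ((l + m) * algebraMap F K ((A ^ (n + 1)).1 i j)
      - algebraMap F K ((A ^ n).1 i j)) = (l + m) * ((l - m) * algebraMap F K ((A ^ (n + 1)).1 i j))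
        - (l * m) * ((l - m) * algebraMap F K ((A ^ n).1 i j)) := by rw [hlm]; ring
    rw [e, h1, h2]
    ring

lemma pow_entry' (A : Matrix.SpecialLinearGroup (Fin 2) F) (l : K) (hlm : l * l = 1)
    (ht : l + l = algebraMap F K A.1.trace) (i j : Fin 2) (n : ℕ) :
    l * algebraMap F K ((A ^ n).1 i j) =
      n * l ^ n * algebraMap F K (A.1 i j) +
        (1 - n) * l ^ (n + 1) * algebraMap F K ((1 : Matrix (Fin 2) (Fin 2) F) i j) := by
  induction n using Nat.twoStepInduction with
  | zero => simp
  | one => simp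
  | more n h1 h2 =>
    rw [cayley_entry, map_sub, map_mul, ← ht]
    have e : l * ((l + l) * algebraMap F K ((A ^ (n + 1)).1 i j)
      - algebraMap F K ((A ^ n).1 i j)) = (l + l) * (l * algebraMap F K ((A ^ (n + 1)).1 i j))
        - (l * l) * (l * algebraMap F K ((A ^ n).1 i j)) := by rw [hlm]; ring
    rw [e, h1, h2]
    push_cast
    ring

lemma pow_mem_center_iff (A : Matrix.SpecialLinearGroup (Fin 2) F) (l m : K) (hlm : l * m = 1)
    (ht : l + m = algebraMap F K A.1.trace) (hne : l ≠ m) (n : ℕ) :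
    A ^ n ∈ Subgroup.center (Matrix.SpecialLinearGroup (Fin 2) F) ↔ (l ^ 2) ^ n = 1 := by
  have hinj := (algebraMap F K).injective
  have hne' : l - m ≠ 0 := sub_ne_zero.2 hne
  have e00 := pow_entry A l m hlm ht 0 0 n
  have e01 := pow_entry A l m hlm ht 0 1 n
  have e10 := pow_entry A l m hlm ht 1 0 n
  have e11 := pow_entry A l m hlm ht 1 1 n
  simp at e00 e01 e10 e11
  have hl0 : l ≠ 0 := left_ne_zero_of_mul_eq_one hlm
  have hmn : l ^ n * m ^ n = 1 := by rw [← mul_pow, hlm, one_pow]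
  have key : (l ^ 2) ^ n = 1 ↔ l ^ n - m ^ n = 0 := by
    rw [← pow_mul, mul_comm, pow_mul, pow_two]
    constructor
    · intro h
      have : l ^ n * (l ^ n - m ^ n) = 0 := by rw [mul_sub, h, hmn, sub_self]
      exact (mul_eq_zero.1 this).resolve_left (pow_ne_zero _ hl0)
    · intro h
      linear_combination l ^ n * h + hmn
  rw [key]
  constructor
  · intro h
    rw [mem_center_sl2] at h
    obtain ⟨h1, h2, h3⟩ := h
    by_contra hc
    simp only [Matrix.SpecialLinearGroup.coe_pow] at h1 h2 h3
    rw [h1] at e01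
    rw [h2] at e10
    rw [h3] at e00
    simp [hc] at e01 e10
    have h4 : A.1 0 0 = A.1 1 1 := by
      apply hinj
      apply mul_left_cancel₀ hc
      linear_combination e11 - e00
    have hd := A.2
    rw [Matrix.det_fin_two, e01, e10, h4] at hd
    rw [Matrix.trace_fin_two, h4] at ht
    have hd' := congrArg (algebraMap F K) hd
    simp at hd' ht
    apply hne'
    apply pow_eq_zero_iff (n := 2) (by norm_num) |>.1
    linear_combination (l + m + 2 * algebraMap F K (A.1 1 1)) * ht + 4 * hd' - 4 * hlm
  · intro h
    rw [h] at e00 e01 e10 e11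
    rw [mem_center_sl2]
    simp [hne'] at e01 e10
    refine ⟨by simpa using e01, by simpa using e10, ?_⟩
    apply hinj
    apply mul_left_cancel₀ hne'
    rw [Matrix.SpecialLinearGroup.coe_pow]
    linear_combination e00 - e11

lemma orderOf_mk (A : Matrix.SpecialLinearGroup (Fin 2) F) (l m : K) (hlm : l * m = 1)
    (ht : l + m = algebraMap F K A.1.trace) (hne : l ≠ m) :
    orderOf (QuotientGroup.mk A : PSL2 F) = orderOf (l ^ 2) := by
  apply Nat.dvd_antisymm
  · rw [orderOf_dvd_iff_pow_eq_one, ← QuotientGroup.mk_pow, QuotientGroup.eq_one_iff,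
      pow_mem_center_iff A l m hlm ht hne, pow_orderOf_eq_one]
  · rw [orderOf_dvd_iff_pow_eq_one, ← pow_mem_center_iff A l m hlm ht hne,
      ← QuotientGroup.eq_one_iff, QuotientGroup.mk_pow, pow_orderOf_eq_one]

lemma pow_char_mk (p : ℕ) [CharP F p] (A : Matrix.SpecialLinearGroup (Fin 2) F) (l : K)
    (hlm : l * l = 1) (ht : l + l = algebraMap F K A.1.trace) :
    (QuotientGroup.mk A : PSL2 F) ^ p = 1 := by
  rw [← QuotientGroup.mk_pow, QuotientGroup.eq_one_iff, mem_center_sl2]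
  have hinj := (algebraMap F K).injective
  have hl0 : l ≠ 0 := left_ne_zero_of_mul_eq_one hlm
  have hp : (p : K) = 0 := by
    rw [← map_natCast (algebraMap F K), CharP.cast_eq_zero, map_zero]
  have e00 := pow_entry' A l hlm ht 0 0 p
  have e01 := pow_entry' A l hlm ht 0 1 p
  have e10 := pow_entry' A l hlm ht 1 0 p
  have e11 := pow_entry' A l hlm ht 1 1 p
  simp [hp, hl0] at e00 e01 e10 e11
  refine ⟨by simpa using e01, by simpa using e10, ?_⟩
  apply hinj
  apply mul_left_cancel₀ hl0
  rw [Matrix.SpecialLinearGroup.coe_pow, e00, e11]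

end

lemma exists_orderOf_char (F : Type*) [Field F] (p : ℕ) [CharP F p] (hp : p.Prime) :
    ∃ g : PSL2 F, orderOf g = p := by
  have := Fact.mk hp
  let A : Matrix.SpecialLinearGroup (Fin 2) F := ⟨!![1, 1; 0, 1], by simp⟩
  refine ⟨QuotientGroup.mk A, orderOf_eq_prime ?_ ?_⟩
  · apply pow_char_mk (K := F) p A 1 (by simp)
    simp [A, Matrix.trace_fin_two]
  · rw [Ne, QuotientGroup.eq_one_iff, mem_center_sl2]
    simp [A]

lemma mem_base {F K : Type*} [Field F] [Fintype F] [Field K] [Algebra F K] (x : K)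
    (hx : x ^ Fintype.card F = x) : ∃ y : F, algebraMap F K y = x := by
  have h1 : 1 < Fintype.card F := Fintype.one_lt_card
  have h := FiniteField.roots_X_pow_card_sub_X F
  have hne := FiniteField.X_pow_card_sub_X_ne_zero K h1
  have hs : (Polynomial.X ^ Fintype.card F - Polynomial.X : Polynomial F).Splits := by
    rw [Polynomial.splits_iff_card_roots, h, FiniteField.X_pow_card_sub_X_natDegree_eq F h1]
    simp
  have h2 := hs.roots_map (algebraMap F K)
  have h3 : x ∈ ((Polynomial.X ^ Fintype.card F - Polynomial.X : Polynomial F).map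
      (algebraMap F K)).roots := by
    simp [Polynomial.mem_roots, hne, hx]
  rw [h2, h, Multiset.mem_map] at h3
  obtain ⟨y, -, hy⟩ := h3
  exact ⟨y, hy⟩

lemma orderOf_cases (F : Type) [Field F] [Fintype F] (p : ℕ) [CharP F p] (g : PSL2 F) :
    orderOf g ∣ p ∨ orderOf g ∣ (Fintype.card F - 1) / Nat.gcd 2 (Fintype.card F - 1) ∨
      orderOf g ∣ (Fintype.card F + 1) / Nat.gcd 2 (Fintype.card F + 1) := by
  obtain ⟨A, rfl⟩ := QuotientGroup.mk_surjective g
  let K := AlgebraicClosure F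
  obtain ⟨l, hl⟩ : ∃ l : K, l ^ 2 - algebraMap F K A.1.trace * l + 1 = 0 := by
    have := IsAlgClosed.exists_root (Polynomial.X ^ 2 -
      Polynomial.C (algebraMap F K A.1.trace) * Polynomial.X + 1 : Polynomial K) (by
        have : (Polynomial.X ^ 2 -
          Polynomial.C (algebraMap F K A.1.trace) * Polynomial.X + 1 : Polynomial K).degree = 2 := by
          compute_degree!
        rw [this]; norm_num)
    obtain ⟨l, h⟩ := this
    exact ⟨l, by simpa using h⟩
  set t := algebraMap F K A.1.trace with htdef
  have hlm : l * (t - l) = 1 := by linear_combination -hl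
  have hl0 : l ≠ 0 := left_ne_zero_of_mul_eq_one hlm
  by_cases hne : l = t - l
  · left
    rw [orderOf_dvd_iff_pow_eq_one]
    exact pow_char_mk p A l (by rw [← hne] at hlm; exact hlm) (by rw [← htdef]; linear_combination hne)
  · right
    rw [orderOf_mk A l (t - l) hlm (by rw [← htdef]; ring) hne]
    have hfr : (l ^ Fintype.card F) ^ 2 - t * (l ^ Fintype.card F) + 1 = 0 := by
      have := congrArg (FiniteField.frobeniusAlgHom F K) hl
      rw [map_add, map_sub, map_mul, map_pow, map_one, map_zero, htdef, AlgHom.commutes] at this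
      exact this
    have hor : (l ^ Fintype.card F - l) * (l ^ Fintype.card F - (t - l)) = 0 := by
      linear_combination hfr - hl
    have hdiv : ∀ e : ℕ, l ^ e = 1 → orderOf (l ^ 2) ∣ e / Nat.gcd 2 e := by
      intro e he
      rw [orderOf_dvd_iff_pow_eq_one, ← pow_mul, ← Nat.mul_div_assoc _ (Nat.gcd_dvd_right 2 e),
        Nat.mul_div_right_comm (Nat.gcd_dvd_left 2 e), mul_comm, pow_mul, he, one_pow]
    rcases mul_eq_zero.1 hor with h | h
    · left
      apply hdiv
      have hc : Fintype.card F = (Fintype.card F - 1) + 1 := by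
        have := Fintype.card_pos (α := F); omega
      rw [sub_eq_zero, hc, pow_succ] at h
      exact mul_right_cancel₀ hl0 (by rw [h, one_mul])
    · right
      apply hdiv
      rw [pow_succ, sub_eq_zero.1 h, mul_comm, hlm]

lemma exists_orderOf (F : Type) [Field F] [Fintype F] (p : ℕ) [CharP F p] (hp : p.Prime)
    (e n : ℕ) (he : e = Fintype.card F - 1 ∨ e = Fintype.card F + 1) (hn1 : n ≠ 1)
    (hn : n ∣ e / Nat.gcd 2 e) : ∃ g : PSL2 F, orderOf g = n := by
  let K := AlgebraicClosure F
  have hcard : (Fintype.card F : K) = 0 := by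
    rw [← map_natCast (algebraMap F K), FiniteField.cast_card_eq_zero, map_zero]
  have heK : (e : K) ≠ 0 := by
    rcases he with rfl | rfl
    · rw [Nat.cast_sub Fintype.card_pos, hcard]; simp
    · push_cast; rw [hcard]; simp
  have hne : n ∣ e := hn.trans (Nat.div_dvd_of_dvd (Nat.gcd_dvd_right 2 e))
  have hnK : (n : K) ≠ 0 := by
    intro h
    obtain ⟨k, rfl⟩ := hne
    apply heK
    rw [Nat.cast_mul, h, zero_mul]
  have : NeZero (n : K) := ⟨hnK⟩
  obtain ⟨z, hz⟩ := HasEnoughRootsOfUnity.exists_primitiveRoot K n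
  obtain ⟨l, hl2, hle⟩ : ∃ l : K, l ^ 2 = z ∧ l ^ e = 1 := by
    rcases Nat.even_or_odd e with h | h
    · obtain ⟨l, hl⟩ := IsAlgClosed.exists_pow_nat_eq z (n := 2) (by norm_num)
      refine ⟨l, hl, ?_⟩
      rw [Nat.gcd_eq_left h.two_dvd] at hn
      rw [← Nat.mul_div_cancel' h.two_dvd, pow_mul, hl]
      exact (hz.pow_eq_one_iff_dvd _).2 hn
    · obtain ⟨k, hk⟩ := h
      have hze : z ^ e = 1 := (hz.pow_eq_one_iff_dvd _).2 hne
      refine ⟨z ^ (k + 1), ?_, ?_⟩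
      · rw [← pow_mul, show (k + 1) * 2 = e + 1 by omega, pow_succ, hze, one_mul]
      · rw [← pow_mul, mul_comm, pow_mul, hze, one_pow]
  have hl0 : l ≠ 0 := by
    rintro rfl
    have : e ≠ 0 := by rintro rfl; simp at heK
    simp [this] at hle
  have hfix : (l + l⁻¹) ^ Fintype.card F = l + l⁻¹ := by
    have h1 : (l + l⁻¹) ^ Fintype.card F = l ^ Fintype.card F + (l ^ Fintype.card F)⁻¹ := by
      have := map_add (FiniteField.frobeniusAlgHom F K) l l⁻¹
      rw [map_inv₀] at this
      exact this
    rw [h1]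
    rcases he with he | he
    · have hc : Fintype.card F = e + 1 := by
        have := Fintype.card_pos (α := F); omega
      rw [hc, pow_succ, hle, one_mul]
    · rw [he, pow_succ] at hle
      rw [eq_inv_of_mul_eq_one_left hle, inv_inv, add_comm]
  obtain ⟨t, ht⟩ := mem_base (F := F) _ hfix
  let A : Matrix.SpecialLinearGroup (Fin 2) F := ⟨!![0, -1; 1, t], by simp⟩
  refine ⟨QuotientGroup.mk A, ?_⟩
  rw [orderOf_mk A l l⁻¹ (mul_inv_cancel₀ hl0) (by simp [A, Matrix.trace_fin_two, ht]) ?_, hl2]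
  · exact hz.eq_orderOf.symm
  · intro h
    have : z = 1 := by
      rw [← hl2, pow_two]
      nth_rw 2 [h]
      exact mul_inv_cancel₀ hl0
    rw [this] at hz
    exact hn1 (hz.unique IsPrimitiveRoot.one)

lemma simplex_extend (G : Type*) [Group G] [Finite G] (S : Finset ℕ) (hS : IsPrimeSimplex G S) :
    ∃ T, IsMaximalPrimeSimplex G T ∧ S ⊆ T := by
  have hfin : {T | IsPrimeSimplex G T}.Finite := by
    apply Set.Finite.subset (Finset.finite_toSet (Nat.card G).primeFactors.powerset)
    rintro T ⟨-, h1, g, hg⟩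
    simp only [Finset.coe_powerset, Set.mem_preimage, Set.mem_powerset_iff]
    intro p hp
    have : p ∣ Nat.card G := (Finset.dvd_prod_of_mem _ hp).trans (hg ▸ orderOf_dvd_natCard g)
    simpa using ⟨h1 p hp, this, Nat.card_pos.ne'⟩
  obtain ⟨T, hT, hm⟩ := hfin.exists_le_maximal hS
  exact ⟨T, ⟨hm.1, fun U hU hTU => (hm.eq_of_le hU hTU).symm⟩, hT⟩

lemma card_one_of_onePrime (S : Finset ℕ) (hS : S.Nonempty) (hp : ∀ p ∈ S, p.Prime) (m : ℕ)
    (hm : OnePrime m) (hd : ∏ p ∈ S, p ∣ m) : S.card = 1 := by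
  apply le_antisymm _ hS.card_pos
  rw [Finset.card_le_one]
  intro a ha b hb
  exact hm a b (hp a ha) (hp b hb) ((Finset.dvd_prod_of_mem _ ha).trans hd)
    ((Finset.dvd_prod_of_mem _ hb).trans hd)

theorem stmt_18 (F : Type) [Field F] [Fintype F] (hq : 4 ≤ Fintype.card F) :
    PurePrimeSimplicialComplex (PSL2 F) ↔
      Fintype.card F ∈ ({4, 5, 7, 8, 9, 17} : Finset ℕ) := by
  obtain ⟨p, hchar⟩ := CharP.exists F
  obtain ⟨n, hp, hpn⟩ := FiniteField.card F p
  constructor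
  · intro hpure
    have hpq : p ∣ Fintype.card F := by rw [hpn]; exact dvd_pow_self p n.ne_zero
    have hsub : ∀ e, (e = Fintype.card F - 1 ∨ e = Fintype.card F + 1) →
        ¬ p ∣ e / Nat.gcd 2 e := by
      intro e he h
      have h2 : p ∣ e := h.trans (Nat.div_dvd_of_dvd (Nat.gcd_dvd_right 2 e))
      have : p ∣ 1 := by
        rcases he with rfl | rfl
        · have := Nat.dvd_sub hpq h2
          rwa [Nat.sub_sub_self (by omega)] at this
        · exact (Nat.dvd_add_right hpq).1 h2
      exact hp.one_lt.ne' (Nat.dvd_one.1 this)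
    have hmax : IsMaximalPrimeSimplex (PSL2 F) {p} := by
      obtain ⟨g, hg⟩ := exists_orderOf_char F p hp
      refine ⟨⟨by simp, by simpa using hp, g, by simpa using hg⟩, ?_⟩
      rintro T ⟨hT, hTp, g, hg⟩ hsT
      have hpT : p ∈ T := by simpa using hsT
      have hpd : p ∣ orderOf g := hg ▸ Finset.dvd_prod_of_mem _ hpT
      have hgp : orderOf g ∣ p := by
        rcases orderOf_cases F p g with h | h | h
        · exact h
        · exact absurd (hpd.trans h) (hsub _ (Or.inl rfl))
        · exact absurd (hpd.trans h) (hsub _ (Or.inr rfl))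
      have hone := card_one_of_onePrime T hT hTp (p ^ 1) (onePrime_pow p 1 hp)
        (by rw [pow_one, ← hg]; exact hgp)
      symm
      exact Finset.eq_of_subset_of_card_le hsT (by simp [hone])
    have hone : ∀ e, (e = Fintype.card F - 1 ∨ e = Fintype.card F + 1) →
        OnePrime (e / Nat.gcd 2 e) := by
      intro e he r s hr hs hrd hsd
      by_contra hrs
      have hcop : Nat.Coprime r s := (Nat.coprime_primes hr hs).2 hrs
      obtain ⟨g, hg⟩ := exists_orderOf F p hp e (r * s) he
        (fun h => hr.one_lt.ne' (Nat.eq_one_of_mul_eq_one_right h))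
        (hcop.mul_dvd_of_dvd_of_dvd hrd hsd)
      have hS : IsPrimeSimplex (PSL2 F) {r, s} :=
        ⟨by simp, by simp [hr, hs], g, by rw [Finset.prod_pair hrs, hg]⟩
      obtain ⟨T, hT, hST⟩ := simplex_extend _ _ hS
      have h1 := hpure _ _ hmax hT
      have h2 := Finset.card_le_card hST
      rw [Finset.card_pair hrs, ← h1] at h2
      simp at h2
    exact nt_main p n hp _ hpn hq (hone _ (Or.inl rfl)) (hone _ (Or.inr rfl))
  · intro hmem
    have key : ∀ S, IsPrimeSimplex (PSL2 F) S → S.card = 1 := by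
      rintro S ⟨hS, hSp, g, hg⟩
      have o2 : ∀ k, OnePrime (2 ^ k) := fun k => onePrime_pow 2 k Nat.prime_two
      have o3 : ∀ k, OnePrime (3 ^ k) := fun k => onePrime_pow 3 k Nat.prime_three
      have o5 : OnePrime (5 ^ 1) := onePrime_pow 5 1 Nat.prime_five
      have o7 : OnePrime (7 ^ 1) := onePrime_pow 7 1 (by norm_num)
      have hboth : OnePrime ((Fintype.card F - 1) / Nat.gcd 2 (Fintype.card F - 1)) ∧
          OnePrime ((Fintype.card F + 1) / Nat.gcd 2 (Fintype.card F + 1)) := by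
        simp only [Finset.mem_insert, Finset.mem_singleton] at hmem
        rcases hmem with h | h | h | h | h | h <;> rw [h]
        · exact ⟨o3 1, o5⟩
        · exact ⟨o2 1, o3 1⟩
        · exact ⟨o3 1, o2 2⟩
        · exact ⟨o7, o3 2⟩
        · exact ⟨o2 2, o5⟩
        · exact ⟨o2 3, o3 2⟩
      rcases orderOf_cases F p g with h | h | h
      · exact card_one_of_onePrime S hS hSp (p ^ 1) (onePrime_pow p 1 hp)
          (by rw [pow_one, ← hg]; exact h)
      · exact card_one_of_onePrime S hS hSp _ hboth.1 (hg ▸ h)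
      · exact card_one_of_onePrime S hS hSp _ hboth.2 (hg ▸ h)
    intro S T hS hT
    rw [key S hS.1, key T hT.1]
end
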